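/- Let (X, μ) be a finite measure space and for each pair (R, n) ∈ ℕ × ℕ let h_{R,n} : X → [0,1] be a measurable function. Assume that for every x ∈ X, lim_{R→∞} ( limsup_{n→∞} h_{R,n}(x) ) = 0. Then for every δ > 0 there exist a measurable set X_δ ⊆ X with μ(X ∖ X_δ) < δ and a strictly increasing sequence (R_j)_{j∈ℕ} in ℕ such that lim_{j→∞} ( limsup_{n→∞} sup_{x ∈ X_δ} h_{R_j, n}(x) ) = 0. -/

import Mathlib

open MeasureTheory Filter Topology

theorem stmt_17_aux {X : Type*} [MeasurableSpace X] (μ : Measure X) [IsFiniteMeasure μ]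
    (h : ℕ → ℕ → X → ℝ)
    (hmeas : ∀ R n, Measurable (h R n))
    (hrange : ∀ R n x, h R n x ∈ Set.Icc (0 : ℝ) 1)
    (hlim : ∀ x, Tendsto (fun R => Filter.limsup (fun n => h R n x) atTop)
      atTop (nhds 0)) (ε : ℝ) (hε : 0 < ε) (η : ENNReal) (hη : 0 < η) :
    ∀ᶠ R in atTop, ∃ N, μ {x | ∃ n, N ≤ n ∧ ε < h R n x} < η := by
  have hG : ∀ R, Measurable (fun x => Filter.limsup (fun n => h R n x) atTop) :=
    fun R => Measurable.limsup (hmeas R)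
  have hT : TendstoInMeasure μ (fun R x => Filter.limsup (fun n => h R n x) atTop) atTop
      (fun _ => (0 : ℝ)) :=
    tendstoInMeasure_of_tendsto_ae (fun R => (hG R).aestronglyMeasurable)
      (Eventually.of_forall hlim)
  have h1 := (hT (ENNReal.ofReal ε) (by simpa using hε)).eventually (gt_mem_nhds hη)
  filter_upwards [h1] with R hR
  have hms : ∀ N, MeasurableSet {x | ∃ n, N ≤ n ∧ ε < h R n x} := by
    intro N
    have : {x | ∃ n, N ≤ n ∧ ε < h R n x} = ⋃ n, ⋃ (_ : N ≤ n), {x | ε < h R n x} := by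
      ext x; simp
    rw [this]
    exact MeasurableSet.iUnion fun n => MeasurableSet.iUnion fun _ =>
      measurableSet_lt measurable_const (hmeas R n)
  have ht : Tendsto (fun N => μ {x | ∃ n, N ≤ n ∧ ε < h R n x}) atTop
      (𝓝 (μ (⋂ N, {x | ∃ n, N ≤ n ∧ ε < h R n x}))) := by
    apply tendsto_measure_iInter_atTop (fun N => (hms N).nullMeasurableSet)
    · rintro a b hab x ⟨n, hn, hx⟩
      exact ⟨n, hab.trans hn, hx⟩
    · exact ⟨0, measure_ne_top _ _⟩
  have hlt : μ (⋂ N, {x | ∃ n, N ≤ n ∧ ε < h R n x}) < η := by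
    refine lt_of_le_of_lt (measure_mono ?_) hR
    intro x hx
    have hx' : ∀ N, ∃ n, N ≤ n ∧ ε < h R n x := by simpa using hx
    have hle : ε ≤ Filter.limsup (fun n => h R n x) atTop := by
      apply le_limsup_of_frequently_le
      · rw [frequently_atTop]
        intro N
        obtain ⟨n, hn, hh⟩ := hx' N
        exact ⟨n, hn, hh.le⟩
      · exact isBoundedUnder_of ⟨1, fun n => (hrange R n x).2⟩
    simp only [Set.mem_ofPred_eq, edist_dist, dist_zero_right]
    exact ENNReal.ofReal_le_ofReal (hle.trans (le_abs_self _))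
  exact (ht.eventually (gt_mem_nhds hlt)).exists

/-- Egorov-type statement for a double limit. If
`limsup_n h R n x → 0` as `R → ∞` pointwise, then for every `δ > 0` there is a set `X_δ` of
measure within `δ` of full and a subsequence `R j` along which the convergence is uniform
on `X_δ`. -/
theorem stmt_17 {X : Type*} [MeasurableSpace X] (μ : Measure X) [IsFiniteMeasure μ]
    (h : ℕ → ℕ → X → ℝ)
    (hmeas : ∀ R n, Measurable (h R n))
    (hrange : ∀ R n x, h R n x ∈ Set.Icc (0 : ℝ) 1)
    (hlim : ∀ x, Tendsto (fun R => Filter.limsup (fun n => h R n x) atTop)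
      atTop (nhds 0)) :
    ∀ δ : ℝ, 0 < δ →
      ∃ Xδ : Set X, MeasurableSet Xδ ∧ μ Xδᶜ < ENNReal.ofReal δ ∧
        ∃ Rj : ℕ → ℕ, StrictMono Rj ∧
          Tendsto (fun j => Filter.limsup
              (fun n => ⨆ x ∈ Xδ, h (Rj j) n x) atTop)
            atTop (nhds 0) := by
  intro δ hδ
  obtain ⟨η, hη, hsum⟩ := ENNReal.exists_pos_sum_of_countable'
    (ε := ENNReal.ofReal δ) (by simpa using hδ) ℕ
  obtain ⟨Rj, hmono, hRj⟩ := extraction_forall_of_eventually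
    (P := fun j R => ∃ N, μ {x | ∃ n, N ≤ n ∧ (1 / ((j : ℝ) + 1)) < h R n x} < η j)
    (fun j => id
      (stmt_17_aux μ h hmeas hrange hlim (1 / ((j : ℝ) + 1)) (by positivity) (η j) (hη j)))
  choose N hN using hRj
  refine ⟨(⋃ j : ℕ, {x | ∃ n, N j ≤ n ∧ (1 / ((j : ℝ) + 1)) < h (Rj j) n x})ᶜ, ?_, ?_,
    Rj, hmono, ?_⟩
  · refine (MeasurableSet.iUnion fun j => ?_).compl
    have : {x | ∃ n, N j ≤ n ∧ (1 / ((j : ℝ) + 1)) < h (Rj j) n x}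
        = ⋃ n, ⋃ (_ : N j ≤ n), {x | (1 / ((j : ℝ) + 1)) < h (Rj j) n x} := by
      ext x; simp
    rw [this]
    exact MeasurableSet.iUnion fun n => MeasurableSet.iUnion fun _ =>
      measurableSet_lt measurable_const (hmeas _ n)
  · rw [compl_compl]
    exact ((measure_iUnion_le _).trans (ENNReal.tsum_le_tsum fun j => (hN j).le)).trans_lt hsum
  · set S := (⋃ j : ℕ, {x | ∃ n, N j ≤ n ∧ (1 / ((j : ℝ) + 1)) < h (Rj j) n x})ᶜ with hS
    have h0 : ∀ j n, 0 ≤ ⨆ x ∈ S, h (Rj j) n x := fun j n =>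
      Real.iSup_nonneg fun x => Real.iSup_nonneg fun _ => (hrange _ _ _).1
    have h1 : ∀ j n, (⨆ x ∈ S, h (Rj j) n x) ≤ 1 := fun j n =>
      Real.iSup_le (fun x => Real.iSup_le (fun _ => (hrange _ _ _).2) zero_le_one) zero_le_one
    refine squeeze_zero (fun j => ?_) (fun j => ?_) tendsto_one_div_add_atTop_nhds_zero_nat
    · exact le_limsup_of_frequently_le (Frequently.of_forall fun n => h0 j n)
        (isBoundedUnder_of ⟨1, fun n => h1 j n⟩)
    · refine limsup_le_of_le (isBoundedUnder_of ⟨0, fun n => h0 j n⟩).isCoboundedUnder_le ?_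
      filter_upwards [eventually_ge_atTop (N j)] with n hn
      have hp : (0 : ℝ) ≤ 1 / ((j : ℝ) + 1) := by positivity
      refine Real.iSup_le (fun x => Real.iSup_le (fun hx => ?_) hp) hp
      by_contra hc
      exact hx (Set.mem_iUnion.2 ⟨j, n, hn, not_le.1 hc⟩)
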